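/- arXiv:2412.10340 — 2 statements merged into one kernel-verified Lean document; each statement's English description precedes it below -/
import Mathlib

section
/- Let G ≤ GL₂(ℤ_p) be an N-Cartan lift with respect to the Cartan subgroup C, and suppose the image of G(p) ∩ C(p) in PGL₂(𝔽_p) contains an element of order greater than 2. If dim 𝔤₁ = 2, then for every n > 1 one has dim 𝔤ₙ ∈ {2, 4}, and if dim 𝔤ₙ = 4 for some n, then dim 𝔤ₘ = 4 for every m > n. -/
/-!
Let `J` span the trace-zero part of the Cartan algebra over `𝔽_p`: `J = diag(1, -1)` in the split
case and `J = [[0, ε], [1, 0]]` in the non-split case. Then `J² = δ` is a nonzero scalar, `C(p)`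
consists of matrices `a + bJ`, and the elements of `C⁺(p)` outside `C(p)` anticommute with `J` and
have scalar square.

Each `𝔤ₙ` is stable under conjugation by `G(p)`. An element `g = a + bJ` of `G(p)` whose class in
`PGL₂(𝔽_p)` has order greater than `2` has `ab ≠ 0`, and then `ad J : u ↦ Ju - uJ` is a multiple of
`Ad g - Ad g⁻¹` (`adJ_mem_of_conj`), so `𝔤ₙ` is stable under `ad J`. For `w ∈ G(p)` outside `C(p)`,
`ad J` anticommutes with `Ad w`; this and `ker (ad J) ∩ im (ad J) = 0` show that `ad J (𝔤ₙ)` is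
never a line (`finrank_map_adJ_ne_one`).

Since `C⁺(p)` has exponent dividing `2(p² - 1)`, which is prime to `p`, surjectivity of the
determinant gives an element of `𝔤₁` with nonzero trace (`exists_trace_ne_zero`). As `ad J` takes
values in `sl₂`, the space `ad J (𝔤₁)` is not all of the two-dimensional `𝔤₁`, so it is zero and
`𝔤₁ = ker (ad J)` (`le_ker_adJ`). Taking `p`-th powers shows `𝔤ₙ ⊆ 𝔤ₙ₊₁` (`glSet_subset_succ`).
Hence `𝔤ₙ ⊇ ker (ad J)` and `dim 𝔤ₙ = 2 + dim ad J (𝔤ₙ)` lies in `{2, 4}`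
(`finrank_eq_two_or_four`); monotonicity of the dimension is the second claim.
-/

open Matrix

noncomputable section

variable (p : ℕ) [Fact p.Prime]

/-- Reduction `GL₂(ℤ_p) → GL₂(ℤ/pⁿℤ)` of the matrix entries modulo `pⁿ`;
`G(pⁿ)` is the image of `G` under this map. -/
def redPow (n : ℕ) : GL (Fin 2) ℤ_[p] →* GL (Fin 2) (ZMod (p ^ n)) :=
  Matrix.GeneralLinearGroup.map (PadicInt.toZModPow n)

/-- Reduction `GL₂(ℤ_p) → GL₂(𝔽_p)` of the matrix entries modulo `p`;
`G(p)` is the image of `G` under this map. -/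
def red : GL (Fin 2) ℤ_[p] →* GL (Fin 2) (ZMod p) :=
  Matrix.GeneralLinearGroup.map (PadicInt.toZMod)

/-- The least positive integer representing a quadratic non-residue modulo `p`. -/
def epsN : ℕ := sInf {n : ℕ | 0 < n ∧ ¬ IsSquare ((n : ZMod p))}

/-- The (carrier set of the) split Cartan subgroup of `GL₂(R)`:
invertible diagonal matrices. -/
def cspSet (R : Type*) [CommRing R] : Set (GL (Fin 2) R) :=
  {A | ∃ a b : R, (A : Matrix (Fin 2) (Fin 2) R) = !![a, 0; 0, b]}

/-- The (carrier set of the) normaliser `C_sp⁺ = C_sp ∪ [[0,1],[1,0]]·C_sp`. -/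
def cspPlusSet (R : Type*) [CommRing R] : Set (GL (Fin 2) R) :=
  {A | ∃ a b : R, (A : Matrix (Fin 2) (Fin 2) R) = !![a, 0; 0, b] ∨
    (A : Matrix (Fin 2) (Fin 2) R) = !![0, 1; 1, 0] * !![a, 0; 0, b]}

/-- The (carrier set of the) non-split Cartan subgroup of `GL₂(R)`:
invertible matrices of the shape `[[a, εb], [b, a]]`.  (Over `ℤ_p`, resp. `ℤ/pⁿℤ`,
invertibility forces `(a, b) ≢ (0, 0) mod p`.) -/
def cnsSet (R : Type*) [CommRing R] (ε : R) : Set (GL (Fin 2) R) :=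
  {A | ∃ a b : R, (A : Matrix (Fin 2) (Fin 2) R) = !![a, ε * b; b, a]}

/-- The (carrier set of the) normaliser `C_ns⁺ = C_ns ∪ [[1,0],[0,-1]]·C_ns`. -/
def cnsPlusSet (R : Type*) [CommRing R] (ε : R) : Set (GL (Fin 2) R) :=
  {A | ∃ a b : R, (A : Matrix (Fin 2) (Fin 2) R) = !![a, ε * b; b, a] ∨
    (A : Matrix (Fin 2) (Fin 2) R) = !![(1 : R), 0; 0, -1] * !![a, ε * b; b, a]}

/-- `G ≤ GL₂(ℤ_p)` is an *N-Cartan lift* with respect to the Cartan subgroup with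
carrier set `C` (with normaliser carrier set `Cplus`): `G` is closed,
`det G = ℤ_p^×`, the reduction `G(p)` is contained in `C⁺(p)` but not in `C(p)`, and
`G(p)` contains an element of `C(p)` which is not a scalar multiple of the identity. -/
def IsNCartanLift (G : Subgroup (GL (Fin 2) ℤ_[p]))
    (C Cplus : Set (GL (Fin 2) ℤ_[p])) : Prop :=
  IsClosed (G : Set (GL (Fin 2) ℤ_[p])) ∧
  (∀ u : ℤ_[p]ˣ, ∃ A ∈ G, Matrix.GeneralLinearGroup.det A = u) ∧
  (⇑(red p) '' ↑G ⊆ ⇑(red p) '' Cplus) ∧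
  ¬ (⇑(red p) '' ↑G ⊆ ⇑(red p) '' C) ∧
  (∃ g ∈ (⇑(red p) '' ↑G) ∩ (⇑(red p) '' C),
    ¬ ∃ c : ZMod p,
      (g : Matrix (Fin 2) (Fin 2) (ZMod p)) = c • (1 : Matrix (Fin 2) (Fin 2) (ZMod p)))

/-- The image `𝔤ₙ` of `Gₙ/Gₙ₊₁` inside `gl₂(𝔽_p)` under `I + pⁿB ↦ (B mod p)`:
the set of reductions mod `p` of matrices `B` with `I + pⁿB ∈ G`. -/
def glSet (n : ℕ) (G : Subgroup (GL (Fin 2) ℤ_[p])) :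
    Set (Matrix (Fin 2) (Fin 2) (ZMod p)) :=
  {M | ∃ A ∈ G, ∃ B : Matrix (Fin 2) (Fin 2) ℤ_[p],
    (A : Matrix (Fin 2) (Fin 2) ℤ_[p]) = 1 + ((p : ℤ_[p]) ^ n) • B ∧
    B.map ⇑(PadicInt.toZMod (p := p)) = M}

/-- The dimension of `𝔤ₙ` as an `𝔽_p`-vector space (recall that `𝔤ₙ` is an
`𝔽_p`-subspace of `gl₂(𝔽_p)`, so it coincides with its span). -/
def glDim (n : ℕ) (G : Subgroup (GL (Fin 2) ℤ_[p])) : ℕ :=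
  Module.finrank (ZMod p) (Submodule.span (ZMod p) (glSet p n G))

/-- `V₁ = 𝔽_p · Id`. -/
def V1 : Submodule (ZMod p) (Matrix (Fin 2) (Fin 2) (ZMod p)) :=
  Submodule.span (ZMod p) {(1 : Matrix (Fin 2) (Fin 2) (ZMod p))}

/-- Non-split case: `V₂ = 𝔽_p · [[0, ε], [1, 0]]`. -/
def V2ns : Submodule (ZMod p) (Matrix (Fin 2) (Fin 2) (ZMod p)) :=
  Submodule.span (ZMod p) {!![0, (epsN p : ZMod p); 1, 0]}

/-- Non-split case: `V₃ = 𝔽_p · [[1,0],[0,-1]] ⊕ 𝔽_p · [[0,ε],[-1,0]]`. -/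
def V3ns : Submodule (ZMod p) (Matrix (Fin 2) (Fin 2) (ZMod p)) :=
  Submodule.span (ZMod p) {!![1, 0; 0, -1], !![0, (epsN p : ZMod p); -1, 0]}

/-- Split case: `V₂ = 𝔽_p · [[1,0],[0,-1]]`. -/
def V2sp : Submodule (ZMod p) (Matrix (Fin 2) (Fin 2) (ZMod p)) :=
  Submodule.span (ZMod p) {!![1, 0; 0, -1]}

/-- Split case: `V₃ = 𝔽_p · [[0,1],[1,0]] ⊕ 𝔽_p · [[0,1],[-1,0]]`. -/
def V3sp : Submodule (ZMod p) (Matrix (Fin 2) (Fin 2) (ZMod p)) :=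
  Submodule.span (ZMod p) {!![0, 1; 1, 0], !![0, 1; -1, 0]}

/-- There is an element of `G(p) ∩ C(p)` whose image in `PGL₂(𝔽_p)` has order
greater than `2`. -/
def HasLargeOrderElt (G : Subgroup (GL (Fin 2) ℤ_[p]))
    (C : Set (GL (Fin 2) ℤ_[p])) : Prop :=
  ∃ g ∈ (⇑(red p) '' ↑G) ∩ (⇑(red p) '' C),
    2 < orderOf (QuotientGroup.mk g :
      GL (Fin 2) (ZMod p) ⧸ Subgroup.center (GL (Fin 2) (ZMod p)))

/-! ### Linear algebra over a field -/

section LinearAlgebra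

variable {F : Type*} [Field F]

/-- The derivation `u ↦ Ju - uJ` of `gl₂(F)`. -/
def adJ (J : Matrix (Fin 2) (Fin 2) F) :
    Matrix (Fin 2) (Fin 2) F →ₗ[F] Matrix (Fin 2) (Fin 2) F :=
  LinearMap.mulLeft F J - LinearMap.mulRight F J

lemma adJ_apply (J u : Matrix (Fin 2) (Fin 2) F) : adJ J u = J * u - u * J := by
  simp [adJ]

lemma trace_adJ (J u : Matrix (Fin 2) (Fin 2) F) : (adJ J u).trace = 0 := by
  rw [adJ_apply, Matrix.trace_sub, Matrix.trace_mul_comm, sub_self]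

/-- If `J² = δ ≠ 0` in odd characteristic, then `ad J` is semisimple enough that its kernel and
its image meet trivially. -/
lemma adJ_eq_zero_of_sq (h2 : (2 : F) ≠ 0) {J : Matrix (Fin 2) (Fin 2) F} {δ : F} (hδ : δ ≠ 0)
    (hJ : J * J = δ • 1) {u : Matrix (Fin 2) (Fin 2) F} (hu : adJ J (adJ J u) = 0) :
    adJ J u = 0 := by
  simp only [adJ_apply] at hu ⊢
  have e : (2 : F) • (J * u * J) = (2 : F) • (δ • u) := by
    have : J * (J * u - u * J) - (J * u - u * J) * J
        = (J * J) * u + u * (J * J) - (2 : F) • (J * u * J) := by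
      rw [two_smul]; noncomm_ring
    rw [this, hJ] at hu
    simp only [smul_mul_assoc, one_mul, mul_smul_comm, mul_one] at hu
    rw [two_smul F (δ • u)]
    exact (sub_eq_zero.mp hu).symm
  have e' : J * u * J = δ • u := smul_right_injective _ h2 e
  have e2 : δ • (J * u) = δ • (u * J) := by
    have := congrArg (· * J) e'
    simpa [mul_assoc, hJ] using this
  rw [smul_right_injective _ hδ e2, sub_self]

/-- A line `ad J (W)` would be spanned by an eigenvector `v` of both `ad J` and conjugation by `w`;
as `w` anticommutes with `J`, the eigenvalue of `ad J` on `v` equals its own negative, so `v` lies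
in both the kernel and the image of `ad J`. -/
lemma finrank_map_adJ_ne_one (h2 : (2 : F) ≠ 0) {J : Matrix (Fin 2) (Fin 2) F} {δ : F}
    (hδ : δ ≠ 0) (hJ : J * J = δ • 1) {w w' : Matrix (Fin 2) (Fin 2) F}
    (hw'w : w' * w = 1) (hwJ : w * J = -(J * w))
    {W : Submodule F (Matrix (Fin 2) (Fin 2) F)}
    (hWJ : ∀ u ∈ W, adJ J u ∈ W) (hWw : ∀ u ∈ W, w * u * w' ∈ W) :
    Module.finrank F (W.map (adJ J)) ≠ 1 := by
  intro h
  have hww' : w * w' = 1 := mul_eq_one_comm.mp hw'w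
  have hJw' : J * w' = -(w' * J) := by
    have := congrArg (fun x => w' * x * w') hwJ
    simp only [mul_neg, neg_mul] at this
    rw [← mul_assoc, hw'w, one_mul, mul_assoc, mul_assoc J, hww', mul_one] at this
    exact this
  have hanti : ∀ u, adJ J (w * u * w') = -(w * adJ J u * w') := by
    intro u
    simp only [adJ_apply]
    have a1 : J * (w * u * w') = -(w * J * u * w') := by rw [hwJ]; noncomm_ring
    have a2 : w * u * w' * J = -(w * (u * J) * w') := by
      have : w' * J = -(J * w') := by rw [hJw', neg_neg]
      rw [mul_assoc _ w' J, this]; noncomm_ring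
    rw [a1, a2]; noncomm_ring
  obtain ⟨⟨v, hv⟩, hv0, hspan⟩ := finrank_eq_one_iff'.mp h
  have hspan' : ∀ y ∈ W.map (adJ J), ∃ c : F, c • v = y := fun y hy => by
    obtain ⟨c, hc⟩ := hspan ⟨y, hy⟩
    exact ⟨c, congrArg Subtype.val hc⟩
  obtain ⟨u, huW, rfl⟩ := hv
  have hv0' : adJ J u ≠ 0 := fun h0 => hv0 (Subtype.ext h0)
  obtain ⟨c, hc⟩ := hspan' (adJ J (adJ J u)) ⟨_, hWJ u huW, rfl⟩
  obtain ⟨d, hd⟩ := hspan' (w * adJ J u * w')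
    ⟨_, neg_mem (hWw u huW), by rw [map_neg, hanti, neg_neg]⟩
  have hd0 : d ≠ 0 := by
    rintro rfl
    rw [zero_smul] at hd
    apply hv0'
    have := congrArg (fun x => w' * x * w) hd
    simp only [mul_zero, zero_mul] at this
    rw [mul_assoc w, ← mul_assoc w' w, hw'w, one_mul, mul_assoc, hw'w, mul_one] at this
    exact this.symm
  have key := hanti (adJ J u)
  rw [← hc, mul_smul_comm, smul_mul_assoc, ← hd, map_smul, ← hc, smul_smul, smul_smul,
    ← neg_smul] at key
  have hcd := smul_left_injective F hv0' key
  have hc0 : c = 0 := by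
    have : 2 * (d * c) = 0 := by linear_combination hcd
    rcases mul_eq_zero.mp this with h | h
    · exact absurd h h2
    · exact (mul_eq_zero.mp h).resolve_left hd0
  rw [hc0, zero_smul] at hc
  exact hv0' (adJ_eq_zero_of_sq h2 hδ hJ hc.symm)

/-- A two-dimensional invariant subspace which is not contained in `sl₂` consists of matrices
commuting with `J`: otherwise `ad J` would map it onto itself (the image being neither zero
nor a line), but `ad J` has image in `sl₂`. -/
lemma le_ker_adJ (h2 : (2 : F) ≠ 0) {J : Matrix (Fin 2) (Fin 2) F} {δ : F}
    (hδ : δ ≠ 0) (hJ : J * J = δ • 1) {w w' : Matrix (Fin 2) (Fin 2) F}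
    (hw'w : w' * w = 1) (hwJ : w * J = -(J * w))
    {W : Submodule F (Matrix (Fin 2) (Fin 2) F)}
    (hWJ : ∀ u ∈ W, adJ J u ∈ W) (hWw : ∀ u ∈ W, w * u * w' ∈ W)
    (hdim : Module.finrank F W = 2) {M : Matrix (Fin 2) (Fin 2) F} (hM : M ∈ W)
    (htr : M.trace ≠ 0) : W ≤ LinearMap.ker (adJ J) := by
  have hne := finrank_map_adJ_ne_one h2 hδ hJ hw'w hwJ hWJ hWw
  have hle : W.map (adJ J) ≤ W := by
    rintro _ ⟨u, hu, rfl⟩; exact hWJ u hu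
  have hlt : Module.finrank F (W.map (adJ J)) < 2 := by
    refine lt_of_lt_of_eq ?_ hdim
    refine Submodule.finrank_lt_finrank_of_lt (lt_of_le_of_ne hle ?_)
    intro he
    rw [← he] at hM
    obtain ⟨u, -, rfl⟩ := hM
    exact htr (trace_adJ J u)
  have h0 : Module.finrank F (W.map (adJ J)) = 0 := by omega
  rw [Submodule.finrank_eq_zero] at h0
  intro u hu
  have : adJ J u ∈ W.map (adJ J) := ⟨u, hu, rfl⟩
  rwa [h0] at this

lemma finrank_ker_adJ_le {J : Matrix (Fin 2) (Fin 2) F}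
    (hcomm : ∀ u, J * u = u * J → ∃ x y : F, u = x • 1 + y • J) :
    Module.finrank F (LinearMap.ker (adJ J)) ≤ 2 := by
  classical
  have hle : LinearMap.ker (adJ J) ≤ Submodule.span F (({1, J} : Finset _) : Set _) := by
    intro u hu
    rw [LinearMap.mem_ker, adJ_apply, sub_eq_zero] at hu
    obtain ⟨x, y, rfl⟩ := hcomm u hu
    refine add_mem (Submodule.smul_mem _ _ (Submodule.subset_span ?_))
      (Submodule.smul_mem _ _ (Submodule.subset_span ?_)) <;> simp
  exact (Submodule.finrank_mono hle).trans
    ((finrank_span_finset_le_card _).trans Finset.card_le_two)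

/-- An invariant subspace `W` containing a two-dimensional space `U` of matrices commuting
with `J` has dimension `2` or `4`, since `dim W = dim (W ∩ ker (ad J)) + dim (ad J (W))`. -/
lemma finrank_eq_two_or_four (h2 : (2 : F) ≠ 0) {J : Matrix (Fin 2) (Fin 2) F} {δ : F}
    (hδ : δ ≠ 0) (hJ : J * J = δ • 1)
    (hcomm : ∀ u, J * u = u * J → ∃ x y : F, u = x • 1 + y • J)
    {w w' : Matrix (Fin 2) (Fin 2) F}
    (hw'w : w' * w = 1) (hwJ : w * J = -(J * w))
    {U W : Submodule F (Matrix (Fin 2) (Fin 2) F)}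
    (hWJ : ∀ u ∈ W, adJ J u ∈ W) (hWw : ∀ u ∈ W, w * u * w' ∈ W)
    (hU : Module.finrank F U = 2) (hUker : U ≤ LinearMap.ker (adJ J)) (hUW : U ≤ W) :
    Module.finrank F W = 2 ∨ Module.finrank F W = 4 := by
  have hne := finrank_map_adJ_ne_one h2 hδ hJ hw'w hwJ hWJ hWw
  have hker : U = LinearMap.ker (adJ J) :=
    Submodule.eq_of_le_of_finrank_le hUker ((finrank_ker_adJ_le hcomm).trans hU.ge)
  have hrn := LinearMap.finrank_range_add_finrank_ker ((adJ J).domRestrict W)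
  rw [LinearMap.range_domRestrict, LinearMap.ker_domRestrict, ← hker] at hrn
  have e : Module.finrank F (U.comap W.subtype) = 2 := by
    rw [(Submodule.comapSubtypeEquivOfLe hUW).finrank_eq, hU]
  have h4 : Module.finrank F W ≤ 4 := by
    refine (Submodule.finrank_le W).trans ?_
    simp [Module.finrank_matrix]
  have e' : Module.finrank F (U.submoduleOf W) = 2 := e
  omega

/-- For `g = a + bJ` with `ab ≠ 0`, the operator `ad J` is a multiple of `Ad g - Ad g⁻¹`. -/
lemma adJ_mem_of_conj (h2 : (2 : F) ≠ 0) {J : Matrix (Fin 2) (Fin 2) F} {δ : F}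
    (hJ : J * J = δ • 1) {g g' : Matrix (Fin 2) (Fin 2) F} (hgg' : g * g' = 1)
    {a b : F} (hg : g = a • 1 + b • J) (ha : a ≠ 0) (hb : b ≠ 0)
    {W : Submodule F (Matrix (Fin 2) (Fin 2) F)}
    (h : ∀ u ∈ W, g * u * g' ∈ W) (h' : ∀ u ∈ W, g' * u * g ∈ W) :
    ∀ u ∈ W, adJ J u ∈ W := by
  intro u hu
  set k : Matrix (Fin 2) (Fin 2) F := a • 1 - b • J with hk
  have hgk : g * k = (a * a - b * b * δ) • 1 := by
    rw [hg, hk]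
    simp only [add_mul, mul_sub, smul_mul_assoc, mul_smul_comm, one_mul, mul_one, hJ]
    module
  have hkN : k = (a * a - b * b * δ) • g' := by
    have hg'g : g' * g = 1 := mul_eq_one_comm.mp hgg'
    calc k = g' * (g * k) := by rw [← mul_assoc, hg'g, one_mul]
      _ = _ := by rw [hgk]; simp
  have hkey : g * u * k - k * u * g = (2 * a * b) • adJ J u := by
    rw [hg, hk, adJ_apply]
    simp only [add_mul, mul_sub, sub_mul, mul_add, smul_mul_assoc, mul_smul_comm, one_mul, mul_one]
    module
  have hmem : g * u * k - k * u * g ∈ W := by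
    rw [hkN, mul_smul_comm, smul_mul_assoc, smul_mul_assoc]
    exact sub_mem (W.smul_mem _ (h u hu)) (W.smul_mem _ (h' u hu))
  rw [hkey] at hmem
  exact (Submodule.smul_mem_iff _ (mul_ne_zero (mul_ne_zero h2 ha) hb)).mp hmem

end LinearAlgebra

/-! ### The filtration of `G` by congruence subgroups -/

section Filtration

variable {p}

lemma red_coe (A : GL (Fin 2) ℤ_[p]) :
    (red p A : Matrix (Fin 2) (Fin 2) (ZMod p)) =
      (PadicInt.toZMod (p := p)).mapMatrix (A : Matrix (Fin 2) (Fin 2) ℤ_[p]) := rfl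

lemma toZMod_p : PadicInt.toZMod (p : ℤ_[p]) = 0 := by simp

lemma dvd_of_toZMod_eq_zero {x : ℤ_[p]} (h : PadicInt.toZMod x = 0) : (p : ℤ_[p]) ∣ x := by
  rw [← RingHom.mem_ker, PadicInt.ker_toZMod, PadicInt.maximalIdeal_eq_span_p,
    Ideal.mem_span_singleton] at h
  exact h

lemma conj_mem_glSet {n : ℕ} {G : Subgroup (GL (Fin 2) ℤ_[p])} {A : GL (Fin 2) ℤ_[p]}
    (hA : A ∈ G) {M : Matrix (Fin 2) (Fin 2) (ZMod p)} (hM : M ∈ glSet p n G) :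
    (red p A : Matrix (Fin 2) (Fin 2) (ZMod p)) * M *
      (red p A⁻¹ : Matrix (Fin 2) (Fin 2) (ZMod p)) ∈ glSet p n G := by
  obtain ⟨X, hX, B, hXB, rfl⟩ := hM
  refine ⟨A * X * A⁻¹, G.mul_mem (G.mul_mem hA hX) (G.inv_mem hA),
    (A : Matrix (Fin 2) (Fin 2) ℤ_[p]) * B * (A⁻¹ : GL (Fin 2) ℤ_[p]), ?_, ?_⟩
  · rw [Units.val_mul, Units.val_mul, hXB, mul_add, add_mul, mul_one, Units.mul_inv]
    simp
  · rw [red_coe, red_coe]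
    change (PadicInt.toZMod (p := p)).mapMatrix _ = _ * (PadicInt.toZMod (p := p)).mapMatrix B * _
    rw [map_mul, map_mul]

lemma conj_mem_span {n : ℕ} {G : Subgroup (GL (Fin 2) ℤ_[p])} {A : GL (Fin 2) ℤ_[p]}
    (hA : A ∈ G) {M : Matrix (Fin 2) (Fin 2) (ZMod p)}
    (hM : M ∈ Submodule.span (ZMod p) (glSet p n G)) :
    (red p A : Matrix (Fin 2) (Fin 2) (ZMod p)) * M *
      (red p A⁻¹ : Matrix (Fin 2) (Fin 2) (ZMod p)) ∈ Submodule.span (ZMod p) (glSet p n G) := by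
  induction hM using Submodule.span_induction with
  | mem x h => exact Submodule.subset_span (conj_mem_glSet hA h)
  | zero => simp
  | add x y _ _ hx hy => rw [mul_add, add_mul]; exact add_mem hx hy
  | smul a x _ hx => rw [mul_smul_comm, smul_mul_assoc]; exact Submodule.smul_mem _ _ hx

lemma one_add_pow_expand {R : Type*} [Ring R] (x : R) (k : ℕ) :
    ∃ r : R, (1 + x) ^ k = 1 + (k : R) * x + (k.choose 2 : R) * x ^ 2 + x ^ 3 * r := by
  induction k with
  | zero => exact ⟨0, by simp⟩
  | succ k ih =>
    obtain ⟨r, hr⟩ := ih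
    refine ⟨r * (1 + x) + (k.choose 2 : R), ?_⟩
    have hc : (((k + 1).choose 2 : ℕ) : R) = k + (k.choose 2 : R) := by
      rw [Nat.choose_succ_succ' k 1, Nat.choose_one_right, Nat.cast_add]
    rw [pow_succ, hr, hc, Nat.cast_succ, mul_add (x ^ 3),
      (Nat.cast_commute (k.choose 2) (x ^ 3)).symm.eq]
    noncomm_ring

/-- The `p`-th power map sends `1 + pⁿB` to `1 + pⁿ⁺¹B'` with `B' ≡ B` modulo `p`;
this uses `n ≥ 1` and `p` odd. -/
lemma glSet_subset_succ (hp : Odd p) {n : ℕ} (hn : 1 ≤ n) (G : Subgroup (GL (Fin 2) ℤ_[p])) :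
    glSet p n G ⊆ glSet p (n + 1) G := by
  rintro _ ⟨A, hA, B, hAB, rfl⟩
  obtain ⟨r, hr⟩ := one_add_pow_expand ((p : ℤ_[p]) ^ n • B) p
  obtain ⟨m, rfl⟩ : ∃ m, n = m + 1 := ⟨n - 1, by omega⟩
  obtain ⟨c, hc⟩ := hp
  have hch : p.choose 2 = p * c := by
    rw [Nat.choose_two_right, hc]
    have : (2 * c + 1) * (2 * c + 1 - 1) = 2 * ((2 * c + 1) * c) := by
      rw [Nat.add_sub_cancel]; ring
    rw [this, Nat.mul_div_cancel_left _ (by norm_num)]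
  refine ⟨A ^ p, G.pow_mem hA p,
    B + (p : ℤ_[p]) • ((p : ℤ_[p]) ^ m • ((c : ℤ_[p]) • B ^ 2) +
      ((p : ℤ_[p]) ^ (2 * m)) • (B ^ 3 * r)), ?_, ?_⟩
  · rw [Units.val_pow_eq_pow_val, hAB, hr, hch]
    have e1 : ∀ (k : ℕ) (X : Matrix (Fin 2) (Fin 2) ℤ_[p]),
        (k : Matrix (Fin 2) (Fin 2) ℤ_[p]) * X = (k : ℤ_[p]) • X := by
      intro k X; rw [← nsmul_eq_mul, Nat.cast_smul_eq_nsmul]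
    rw [e1, e1, smul_pow, smul_pow, smul_mul_assoc]
    push_cast
    module
  · ext i j
    simp

lemma glSet_mono (hp : Odd p) (G : Subgroup (GL (Fin 2) ℤ_[p])) {n m : ℕ} (hn : 1 ≤ n)
    (hnm : n ≤ m) : glSet p n G ⊆ glSet p m G := by
  induction m, hnm using Nat.le_induction with
  | base => exact subset_rfl
  | succ m hm ih => exact ih.trans (glSet_subset_succ hp (hn.trans hm) G)

/-- If an element `A ∈ G` of determinant `1 + p` has `A ^ k ≡ 1` modulo `p` with `k` prime to `p`,
then `A ^ k = 1 + pB` where `tr B ≡ k` modulo `p`. -/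
lemma exists_trace_ne_zero {G : Subgroup (GL (Fin 2) ℤ_[p])} {A : GL (Fin 2) ℤ_[p]}
    (hA : A ∈ G) (hdet : (A : Matrix (Fin 2) (Fin 2) ℤ_[p]).det = 1 + p) {k : ℕ}
    (hk : (k : ZMod p) ≠ 0) (hAk : (red p A : Matrix (Fin 2) (Fin 2) (ZMod p)) ^ k = 1) :
    ∃ M ∈ glSet p 1 G, M.trace ≠ 0 := by
  have hdvd : ∀ i j, ∃ y : ℤ_[p],
      ((A : Matrix (Fin 2) (Fin 2) ℤ_[p]) ^ k - 1) i j = p * y := by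
    intro i j
    refine dvd_of_toZMod_eq_zero ?_
    have : (PadicInt.toZMod (p := p)).mapMatrix
        ((A : Matrix (Fin 2) (Fin 2) ℤ_[p]) ^ k - 1) = 0 := by
      rw [map_sub, map_pow, ← red_coe, hAk, map_one, sub_self]
    exact congrFun (congrFun this i) j
  choose B hB using hdvd
  have hAB : (A : Matrix (Fin 2) (Fin 2) ℤ_[p]) ^ k = 1 + (p : ℤ_[p]) • Matrix.of B := by
    rw [← sub_eq_iff_eq_add']
    ext i j
    rw [hB]; rfl
  refine ⟨_, ⟨A ^ k, G.pow_mem hA k, Matrix.of B, ?_, rfl⟩, ?_⟩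
  · rw [Units.val_pow_eq_pow_val, hAB, pow_one]
  · obtain ⟨r, hr⟩ := one_add_pow_expand (p : ℤ_[p]) k
    have hd := congrArg Matrix.det hAB
    rw [Matrix.det_pow, hdet, hr, Matrix.det_fin_two] at hd
    simp only [Matrix.add_apply, Matrix.smul_apply, Matrix.one_apply_eq, Matrix.of_apply,
      smul_eq_mul, ne_eq, zero_ne_one, one_ne_zero, not_false_eq_true, Matrix.one_apply_ne,
      zero_add] at hd
    have hp0 : (p : ℤ_[p]) ≠ 0 := by exact_mod_cast (Fact.out : p.Prime).ne_zero
    have ht : B 0 0 + B 1 1 = k + p * ((k.choose 2 : ℤ_[p]) + p * r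
        - (B 0 0 * B 1 1 - B 0 1 * B 1 0)) := by
      apply mul_left_cancel₀ hp0
      linear_combination -hd
    have ht' := congrArg (PadicInt.toZMod (p := p)) ht
    rw [map_add, map_add, map_mul, toZMod_p, zero_mul, add_zero, map_natCast] at ht'
    rw [Matrix.trace_fin_two]
    simpa [ht'] using hk

lemma exists_det_eq (G : Subgroup (GL (Fin 2) ℤ_[p]))
    (h : ∀ u : ℤ_[p]ˣ, ∃ A ∈ G, Matrix.GeneralLinearGroup.det A = u) :
    ∃ A ∈ G, (A : Matrix (Fin 2) (Fin 2) ℤ_[p]).det = 1 + p := by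
  have hu : IsUnit (1 + p : ℤ_[p]) := by
    by_contra hn
    have hm : (1 + p : ℤ_[p]) ∈ IsLocalRing.maximalIdeal ℤ_[p] := hn
    rw [← PadicInt.ker_toZMod, RingHom.mem_ker, map_add, toZMod_p] at hm
    simp at hm
  obtain ⟨A, hA, hdet⟩ := h hu.unit
  exact ⟨A, hA, by simpa using congrArg Units.val hdet⟩

/-- The elements `a + bJ` are fixed by the square of the Frobenius `x ↦ xᵖ`. -/
lemma pow_p_sq_eq (hp : Odd p) {J : Matrix (Fin 2) (Fin 2) (ZMod p)} {δ : ZMod p} (hδ : δ ≠ 0)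
    (hJ : J * J = δ • 1) (a b : ZMod p) :
    (a • 1 + b • J : Matrix (Fin 2) (Fin 2) (ZMod p)) ^ (p ^ 2) = a • 1 + b • J := by
  have hc : Commute (a • 1 : Matrix (Fin 2) (Fin 2) (ZMod p)) (b • J) :=
    (Commute.one_left _).smul_left a
  have : ExpChar (Matrix (Fin 2) (Fin 2) (ZMod p)) p := ExpChar.prime Fact.out
  obtain ⟨c, hc'⟩ := hp
  have hcp : p - 1 = 2 * c := by omega
  have hJp : J ^ p = δ ^ c • J := by
    have : J ^ p = J ^ (2 * c + 1) := congrArg (J ^ ·) hc'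
    rw [this, pow_succ, pow_mul, pow_two J, hJ, smul_pow, one_pow, smul_mul_assoc, one_mul]
  have hJpp : J ^ (p ^ 2) = J := by
    have hfer : δ ^ c * δ ^ c = 1 := by
      rw [← pow_add, ← two_mul, ← hcp]; exact ZMod.pow_card_sub_one_eq_one hδ
    rw [pow_two p, pow_mul, hJp, smul_pow, hJp, ZMod.pow_card, smul_smul, hfer, one_smul]
  rw [add_pow_expChar_pow_of_commute _ _ hc, smul_pow, smul_pow, hJpp, one_pow]
  simp only [pow_two p, pow_mul, ZMod.pow_card]

end Filtration

/-! ### Reduction to a matrix `J` spanning the trace-zero part of the Cartan algebra -/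

section Cartan

variable {p}

lemma two_ne_zero_zmod (hp : Odd p) : (2 : ZMod p) ≠ 0 := by
  have hp2 : p ≠ 2 := by rintro rfl; exact absurd hp (by decide)
  have : Fact (2 < p) := ⟨lt_of_le_of_ne (Fact.out : p.Prime).two_le hp2.symm⟩
  exact ZMod.neg_one_ne_one.symm ∘ fun h => by linear_combination h

/-- The theorem in terms of `J`: every element of `G(p)` lies in `𝔽_p[J]` or has scalar square,
some element of `G(p) ∩ 𝔽_p[J]` has nonzero coordinates in the basis `1, J`, and some element
of `G(p)` anticommutes with `J`. -/
lemma glDim_of_data (hp : Odd p) {G : Subgroup (GL (Fin 2) ℤ_[p])}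
    (hdet : ∀ u : ℤ_[p]ˣ, ∃ A ∈ G, Matrix.GeneralLinearGroup.det A = u)
    {J : Matrix (Fin 2) (Fin 2) (ZMod p)} {δ : ZMod p} (hδ : δ ≠ 0) (hJ : J * J = δ • 1)
    (hcomm : ∀ u, J * u = u * J → ∃ x y : ZMod p, u = x • 1 + y • J)
    (hnorm : ∀ A ∈ G, (∃ a b : ZMod p, (red p A : Matrix (Fin 2) (Fin 2) (ZMod p))
        = a • 1 + b • J) ∨
      ∃ c : ZMod p, (red p A : Matrix (Fin 2) (Fin 2) (ZMod p)) * red p A = c • 1)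
    (hg : ∃ A ∈ G, ∃ a b : ZMod p, a ≠ 0 ∧ b ≠ 0 ∧
      (red p A : Matrix (Fin 2) (Fin 2) (ZMod p)) = a • 1 + b • J)
    (hw : ∃ A ∈ G, (red p A : Matrix (Fin 2) (Fin 2) (ZMod p)) * J = -(J * red p A))
    (h1 : glDim p 1 G = 2) :
    (∀ n : ℕ, 1 < n → glDim p n G = 2 ∨ glDim p n G = 4) ∧
    (∀ n : ℕ, 1 ≤ n → glDim p n G = 4 → ∀ m : ℕ, n < m → glDim p m G = 4) := by
  have h2 := two_ne_zero_zmod hp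
  obtain ⟨g, hgG, a, b, ha, hb, hgJ⟩ := hg
  obtain ⟨w, hwG, hwJ⟩ := hw
  have hinv : ∀ A : GL (Fin 2) ℤ_[p], (red p A : Matrix (Fin 2) (Fin 2) (ZMod p)) *
      (red p A⁻¹ : Matrix (Fin 2) (Fin 2) (ZMod p)) = 1 := fun A => by
    rw [← Units.val_mul, ← map_mul, mul_inv_cancel, map_one, Units.val_one]
  have hw'w := mul_eq_one_comm.mp (hinv w)
  have hstabw : ∀ n, ∀ u ∈ Submodule.span (ZMod p) (glSet p n G),
      (red p w : Matrix (Fin 2) (Fin 2) (ZMod p)) * u * red p w⁻¹ ∈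
        Submodule.span (ZMod p) (glSet p n G) := fun n u hu => conj_mem_span hwG hu
  have hstabJ : ∀ n, ∀ u ∈ Submodule.span (ZMod p) (glSet p n G),
      adJ J u ∈ Submodule.span (ZMod p) (glSet p n G) := fun n =>
    adJ_mem_of_conj h2 hJ (hinv g) hgJ ha hb (fun u hu => conj_mem_span hgG hu)
      (fun u hu => by simpa using conj_mem_span (G.inv_mem hgG) hu)
  obtain ⟨M, hM, htr⟩ : ∃ M ∈ glSet p 1 G, M.trace ≠ 0 := by
    obtain ⟨A, hA, hdA⟩ := exists_det_eq G hdet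
    -- the square of `red A` lies in `𝔽_p[J]`, whose units have order dividing `p² - 1`
    obtain ⟨c, d, hcd⟩ : ∃ c d : ZMod p,
        (red p A : Matrix (Fin 2) (Fin 2) (ZMod p)) ^ 2 = c • 1 + d • J := by
      rcases hnorm A hA with ⟨c, d, h⟩ | ⟨c, h⟩
      · refine ⟨c * c + d * d * δ, 2 * c * d, ?_⟩
        rw [pow_two, h]
        simp only [add_mul, mul_add, smul_mul_assoc, mul_smul_comm, one_mul, mul_one, hJ]
        module
      · exact ⟨c, 0, by rw [pow_two, h]; simp⟩
    have hfix := pow_p_sq_eq hp hδ hJ c d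
    rw [← hcd] at hfix
    have hp1 : 1 ≤ p ^ 2 := Nat.one_le_pow _ _ (Fact.out : p.Prime).pos
    refine exists_trace_ne_zero (k := 2 * (p ^ 2 - 1)) hA hdA ?_ ?_
    · rw [Nat.cast_mul, Nat.cast_sub hp1]
      simpa using h2
    · have hfix' : ((red p A) ^ 2) ^ (p ^ 2 - 1) * (red p A) ^ 2 = 1 * (red p A) ^ 2 := by
        rw [← pow_succ, Nat.sub_add_cancel hp1, one_mul]
        exact Units.ext (by simpa using hfix)
      have := congrArg Units.val (mul_right_cancel hfix')
      rw [pow_mul]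
      simpa using this
  have hker := le_ker_adJ h2 hδ hJ hw'w hwJ (hstabJ 1) (hstabw 1) h1
    (Submodule.subset_span hM) htr
  refine ⟨fun n hn => ?_, fun n hn h4 m hm => ?_⟩
  · exact finrank_eq_two_or_four h2 hδ hJ hcomm hw'w hwJ (hstabJ n) (hstabw n) h1 hker
      (Submodule.span_mono (glSet_mono hp G le_rfl hn.le))
  · refine le_antisymm ?_ ?_
    · refine (Submodule.finrank_le _).trans ?_
      simp [Module.finrank_matrix]
    · rw [← h4]
      exact Submodule.finrank_mono (Submodule.span_mono (glSet_mono hp G hn hm.le))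

/-- If `ab = 0` then the square of `a + bJ` is scalar, so its class in `PGL₂` has order at most
two. -/
lemma ne_zero_of_two_lt_orderOf {J : Matrix (Fin 2) (Fin 2) (ZMod p)} {δ : ZMod p}
    (hJ : J * J = δ • 1) {g : GL (Fin 2) (ZMod p)} {a b : ZMod p}
    (hg : (g : Matrix (Fin 2) (Fin 2) (ZMod p)) = a • 1 + b • J)
    (hord : 2 < orderOf (QuotientGroup.mk g :
      GL (Fin 2) (ZMod p) ⧸ Subgroup.center (GL (Fin 2) (ZMod p)))) : a ≠ 0 ∧ b ≠ 0 := by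
  by_contra hab
  have hab0 : a * b = 0 := by
    by_contra h; exact hab (mul_ne_zero_iff.mp h)
  have hsq : ((g ^ 2 : GL (Fin 2) (ZMod p)) : Matrix (Fin 2) (Fin 2) (ZMod p))
      = (a * a + b * b * δ) • 1 := by
    rw [Units.val_pow_eq_pow_val, pow_two, hg]
    simp only [add_mul, mul_add, smul_mul_assoc, mul_smul_comm, one_mul, mul_one, hJ, smul_add,
      smul_smul, hab0, mul_comm b a, zero_smul]
    module
  have hcen : g ^ 2 ∈ Subgroup.center (GL (Fin 2) (ZMod p)) := by
    rw [Subgroup.mem_center_iff]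
    intro x
    apply Units.ext
    rw [Units.val_mul, Units.val_mul, hsq]
    simp
  have : (QuotientGroup.mk g : GL (Fin 2) (ZMod p) ⧸
      Subgroup.center (GL (Fin 2) (ZMod p))) ^ 2 = 1 := by
    rw [← QuotientGroup.mk_pow]
    exact (QuotientGroup.eq_one_iff _).mpr hcen
  exact absurd (orderOf_le_of_pow_eq_one (by norm_num) this) (by omega)

lemma epsN_ne_zero (hp : Odd p) : (epsN p : ZMod p) ≠ 0 := by
  have hp2 : p ≠ 2 := by rintro rfl; exact absurd hp (by decide)
  obtain ⟨x, hx⟩ := FiniteField.exists_nonsquare (F := ZMod p) (by rwa [ZMod.ringChar_zmod_n])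
  have hne : {n : ℕ | 0 < n ∧ ¬ IsSquare ((n : ZMod p))}.Nonempty := by
    refine ⟨x.val, ?_, by simpa using hx⟩
    refine Nat.pos_of_ne_zero fun h => hx ?_
    rw [(ZMod.val_eq_zero x).mp h]
    exact IsSquare.zero
  intro h
  have := (Nat.sInf_mem hne).2
  change ¬ IsSquare ((epsN p : ℕ) : ZMod p) at this
  rw [h] at this
  exact this IsSquare.zero

/-- Passage from the Cartan subgroup `C` and its normaliser `C⁺` to `𝔽_p[J]`. -/
lemma glDim_of_cartan (hp : Odd p) {G : Subgroup (GL (Fin 2) ℤ_[p])}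
    {C Cplus : Set (GL (Fin 2) ℤ_[p])}
    {J : Matrix (Fin 2) (Fin 2) (ZMod p)} {δ : ZMod p} (hδ : δ ≠ 0) (hJ : J * J = δ • 1)
    (hcomm : ∀ u, J * u = u * J → ∃ x y : ZMod p, u = x • 1 + y • J)
    (hC : ∀ A ∈ C, ∃ a b : ZMod p,
      (red p A : Matrix (Fin 2) (Fin 2) (ZMod p)) = a • 1 + b • J)
    (hCplus : ∀ A ∈ Cplus, A ∈ C ∨
      ((red p A : Matrix (Fin 2) (Fin 2) (ZMod p)) * J = -(J * red p A) ∧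
      ∃ c : ZMod p, (red p A : Matrix (Fin 2) (Fin 2) (ZMod p)) * red p A = c • 1))
    (hG : IsNCartanLift p G C Cplus) (hord : HasLargeOrderElt p G C) (h1 : glDim p 1 G = 2) :
    (∀ n : ℕ, 1 < n → glDim p n G = 2 ∨ glDim p n G = 4) ∧
    (∀ n : ℕ, 1 ≤ n → glDim p n G = 4 → ∀ m : ℕ, n < m → glDim p m G = 4) := by
  obtain ⟨-, hdet, hsub, hnsub, -⟩ := hG
  refine glDim_of_data hp hdet hδ hJ hcomm ?_ ?_ ?_ h1
  · intro A hA
    obtain ⟨A', hA', he⟩ := hsub ⟨A, hA, rfl⟩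
    rw [← he]
    rcases hCplus A' hA' with h | h
    · exact Or.inl (hC A' h)
    · exact Or.inr h.2
  · obtain ⟨_, ⟨⟨A, hA, rfl⟩, ⟨A', hA', he⟩⟩, ho⟩ := hord
    obtain ⟨a, b, hab⟩ := hC A' hA'
    rw [he] at hab
    obtain ⟨ha, hb⟩ := ne_zero_of_two_lt_orderOf hJ hab ho
    exact ⟨A, hA, a, b, ha, hb, hab⟩
  · obtain ⟨_, ⟨A, hA, rfl⟩, hn⟩ := Set.not_subset.mp hnsub
    obtain ⟨A', hA', he⟩ := hsub ⟨A, hA, rfl⟩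
    refine ⟨A, hA, ?_⟩
    rw [← he]
    rcases hCplus A' hA' with h | h
    · exact absurd ⟨A', h, he⟩ hn
    · exact h.1

end Cartan

/-- **(Lemma 3.9(1).)** Let `G` be an N-Cartan lift with respect to `C` such that the
image of `G(p) ∩ C(p)` in `PGL₂(𝔽_p)` contains an element of order greater than `2`.
If `dim 𝔤₁ = 2`, then for every `n > 1` one has `dim 𝔤ₙ ∈ {2, 4}`, and if
`dim 𝔤ₙ = 4` for some `n ≥ 1`, then `dim 𝔤ₘ = 4` for every `m > n`. -/
theorem glDim_of_dim_one_eq_two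
    (p : ℕ) [Fact p.Prime] (hp : Odd p)
    (G : Subgroup (GL (Fin 2) ℤ_[p]))
    (C Cplus : Set (GL (Fin 2) ℤ_[p]))
    (hC : (C = cspSet ℤ_[p] ∧ Cplus = cspPlusSet ℤ_[p]) ∨
          (C = cnsSet ℤ_[p] ((epsN p : ℤ_[p])) ∧ Cplus = cnsPlusSet ℤ_[p] ((epsN p : ℤ_[p]))))
    (hG : IsNCartanLift p G C Cplus)
    (hord : HasLargeOrderElt p G C)
    (h1 : glDim p 1 G = 2) :
    (∀ n : ℕ, 1 < n → glDim p n G = 2 ∨ glDim p n G = 4) ∧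
    (∀ n : ℕ, 1 ≤ n → glDim p n G = 4 → ∀ m : ℕ, n < m → glDim p m G = 4) := by
  have h2 := two_ne_zero_zmod hp
  rcases hC with ⟨rfl, rfl⟩ | ⟨rfl, rfl⟩
  · refine glDim_of_cartan (J := !![1, 0; 0, -1]) (δ := 1) hp one_ne_zero ?_ ?_ ?_ ?_ hG hord h1
    · ext i j; fin_cases i <;> fin_cases j <;> simp
    · intro u hu
      have h01 := congrFun (congrFun hu 0) 1
      have h10 := congrFun (congrFun hu 1) 0
      simp [Matrix.mul_apply, Fin.sum_univ_two] at h01 h10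
      have e01 : u 0 1 = 0 := (mul_eq_zero.mp (by linear_combination h01 :
        2 * u 0 1 = 0)).resolve_left h2
      have e10 : u 1 0 = 0 := (mul_eq_zero.mp (by linear_combination -h10 :
        2 * u 1 0 = 0)).resolve_left h2
      refine ⟨(u 0 0 + u 1 1) / 2, (u 0 0 - u 1 1) / 2, ?_⟩
      ext i j; fin_cases i <;> fin_cases j <;> simp [e01, e10] <;> field_simp <;> ring
    · rintro A ⟨a, b, hA⟩
      refine ⟨(PadicInt.toZMod a + PadicInt.toZMod b) / 2,
        (PadicInt.toZMod a - PadicInt.toZMod b) / 2, ?_⟩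
      rw [red_coe, hA]
      ext i j; fin_cases i <;> fin_cases j <;> simp <;> field_simp <;> ring
    · rintro A ⟨a, b, hA | hA⟩
      · exact Or.inl ⟨a, b, hA⟩
      · right
        rw [red_coe, hA]
        refine ⟨?_, PadicInt.toZMod a * PadicInt.toZMod b, ?_⟩
        · ext i j
          fin_cases i <;> fin_cases j <;>
            simp [Matrix.mul_apply, Fin.sum_univ_two, Matrix.vecMul, dotProduct]
        · ext i j; fin_cases i <;> fin_cases j <;> simp [Matrix.mul_apply, Fin.sum_univ_two, mul_comm]
  · refine glDim_of_cartan (J := !![0, (epsN p : ZMod p); 1, 0]) (δ := epsN p) hp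
      (epsN_ne_zero hp) ?_ ?_ ?_ ?_ hG hord h1
    · ext i j; fin_cases i <;> fin_cases j <;> simp
    · intro u hu
      have h00 := congrFun (congrFun hu 0) 0
      have h10 := congrFun (congrFun hu 1) 0
      simp [Matrix.mul_apply, Fin.sum_univ_two] at h00 h10
      refine ⟨u 0 0, u 1 0, ?_⟩
      ext i j; fin_cases i <;> fin_cases j <;> simp [← h00, ← h10, mul_comm]
    · rintro A ⟨a, b, hA⟩
      refine ⟨PadicInt.toZMod a, PadicInt.toZMod b, ?_⟩
      rw [red_coe, hA]
      ext i j; fin_cases i <;> fin_cases j <;> simp [mul_comm]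
    · rintro A ⟨a, b, hA | hA⟩
      · exact Or.inl ⟨a, b, hA⟩
      · right
        rw [red_coe, hA]
        refine ⟨?_, PadicInt.toZMod a * PadicInt.toZMod a
          - epsN p * (PadicInt.toZMod b * PadicInt.toZMod b), ?_⟩
        · ext i j
          fin_cases i <;> fin_cases j <;>
            simp [Matrix.mul_apply, Fin.sum_univ_two, Matrix.vecMul, dotProduct, mul_comm]
        · ext i j; fin_cases i <;> fin_cases j <;> simp [Matrix.mul_apply, Fin.sum_univ_two] <;> ring

end
end

section
/- Let p be an odd prime, n ≥ 1, u a unit of ℤ/pⁿℤ and k ∈ ℤ/pⁿℤ. If the matrix [[u, k],[0, 1]] is conjugate in GL₂(ℤ/pⁿℤ) to an element of C_ns⁺(pⁿ), then either u = −1 in ℤ/pⁿℤ, or u = 1 and k = 0 (i.e. the matrix is the identity). -/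
open Matrix

/-!
An element `D * C` of the non-trivial coset, with `D = diag(1, -1)` and `C` in the Cartan
subgroup, has trace `0`, whereas `[[u, k], [0, 1]]` has trace `u + 1`; so `u = -1`.

In the Cartan subgroup itself, `[[u, k], [0, 1]]` fixes the row vector `(0, 1)`, so
`C = [[a, ε b], [b, a]]` fixes a primitive row vector `(x, y)`, namely the second row of `P⁻¹`.
Eliminating `a` from the two resulting equations gives `b * (ε x² - y²) = 0`. As `ε` is a
non-residue and `(x, y)` is nonzero mod `p`, the second factor is a unit, so `b = 0`;
then `(a - 1) x = (a - 1) y = 0`, and primitivity gives `a = 1`. Hence `C`, and with it the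
original matrix, is the identity.
-/

theorem isUnit_of_castHom_ne_zero {p n : ℕ} [Fact p.Prime] (hn : n ≠ 0) (z : ZMod (p ^ n))
    (hz : ZMod.castHom (dvd_pow_self p hn) (ZMod p) z ≠ 0) : IsUnit z := by
  have hp : p.Prime := Fact.out
  have : NeZero (p ^ n) := ⟨pow_ne_zero _ hp.ne_zero⟩
  rw [← ZMod.natCast_zmod_val z] at hz ⊢
  rw [map_natCast, Ne, ZMod.natCast_eq_zero_iff] at hz
  rw [ZMod.isUnit_iff_coprime]
  exact ((hp.coprime_iff_not_dvd.mpr hz).symm).pow_right n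

/-- The binary form `e x² - y²`, the negative of the norm form (in `y + x√e`) of `F(√e)`, is anisotropic. -/
theorem eq_zero_of_nonsquare_mul_sq_eq {F : Type*} [Field F] {e x y : F} (he : ¬ IsSquare e)
    (h : e * x ^ 2 - y ^ 2 = 0) : x = 0 ∧ y = 0 := by
  have hx : x = 0 := by
    by_contra hx
    refine he ⟨y / x, ?_⟩
    field_simp
    linear_combination h
  subst hx
  refine ⟨rfl, ?_⟩
  have : y ^ 2 = 0 := by linear_combination -h
  exact pow_eq_zero_iff two_ne_zero |>.mp this

/-- **(Local analysis in Proposition 4.1.)** Let `p` be an odd prime, `n ≥ 1`,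
`u` a unit of `ℤ/pⁿℤ` and `k ∈ ℤ/pⁿℤ`.  If the matrix `[[u, k], [0, 1]]` is conjugate
in `GL₂(ℤ/pⁿℤ)` to an element of the normaliser of the non-split Cartan subgroup
`C_ns⁺(pⁿ)`, then either `u = -1`, or `u = 1` and `k = 0` (i.e. the matrix is the
identity). -/
theorem eq_neg_one_or_id_of_conj_mem_cnsPlus
    (p : ℕ) [Fact p.Prime] (hp : Odd p) (n : ℕ) (hn : n ≠ 0)
    (ε : ℤ) (hε : ¬ IsSquare ((ε : ZMod p)))
    (u : (ZMod (p ^ n))ˣ) (k : ZMod (p ^ n))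
    (h : ∃ P : GL (Fin 2) (ZMod (p ^ n)), ∃ a b : ZMod (p ^ n),
      ¬ (ZMod.castHom (dvd_pow_self p hn) (ZMod p) a = 0 ∧
         ZMod.castHom (dvd_pow_self p hn) (ZMod p) b = 0) ∧
      ((P : Matrix (Fin 2) (Fin 2) (ZMod (p ^ n))) *
          !![(u : ZMod (p ^ n)), k; 0, 1] *
          ((P⁻¹ : GL (Fin 2) (ZMod (p ^ n))) : Matrix (Fin 2) (Fin 2) (ZMod (p ^ n))) =
            !![a, (ε : ZMod (p ^ n)) * b; b, a] ∨
       (P : Matrix (Fin 2) (Fin 2) (ZMod (p ^ n))) *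
          !![(u : ZMod (p ^ n)), k; 0, 1] *
          ((P⁻¹ : GL (Fin 2) (ZMod (p ^ n))) : Matrix (Fin 2) (Fin 2) (ZMod (p ^ n))) =
            !![1, 0; 0, -1] * !![a, (ε : ZMod (p ^ n)) * b; b, a])) :
    (u : ZMod (p ^ n)) = -1 ∨ ((u : ZMod (p ^ n)) = 1 ∧ k = 0) := by
  obtain ⟨P, a, b, -, h | h⟩ := h
  · right
    have hPQ : (P⁻¹).val * P.val = 1 := P.inv_mul
    have hQP : P.val * (P⁻¹).val = 1 := P.mul_inv
    have hdet : IsUnit (P⁻¹).val.det := (Matrix.isUnit_iff_isUnit_det _).mp (P⁻¹).isUnit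
    set Q := (P⁻¹).val with hQ
    have hMQ : !![(u : ZMod (p ^ n)), k; 0, 1] * Q
        = Q * !![a, (ε : ZMod (p ^ n)) * b; b, a] := by
      rw [← h, ← Matrix.mul_assoc, ← Matrix.mul_assoc, hPQ, Matrix.one_mul]
    have e0 := congrFun (congrFun hMQ 1) 0
    have e1 := congrFun (congrFun hMQ 1) 1
    simp [Matrix.mul_apply, Fin.sum_univ_two] at e0 e1
    rw [Matrix.det_fin_two] at hdet
    have hunit : IsUnit ((ε : ZMod (p ^ n)) * Q 1 0 ^ 2 - Q 1 1 ^ 2) := by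
      apply isUnit_of_castHom_ne_zero hn
      intro h0
      rw [map_sub, map_mul, map_pow, map_pow, map_intCast] at h0
      obtain ⟨hx, hy⟩ := eq_zero_of_nonsquare_mul_sq_eq hε h0
      have := (hdet.map (ZMod.castHom (dvd_pow_self p hn) (ZMod p))).ne_zero
      rw [map_sub, map_mul, map_mul, hx, hy] at this
      simp at this
    have hb : b = 0 := by
      apply hunit.mul_left_eq_zero.mp
      linear_combination Q 1 1 * e0 - Q 1 0 * e1
    subst hb
    have ha : a = 1 := by
      rw [← sub_eq_zero]
      apply hdet.mul_left_eq_zero.mp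
      linear_combination Q 0 1 * e0 - Q 0 0 * e1
    subst ha
    have hone : (!![1, (ε : ZMod (p ^ n)) * 0; 0, 1] : Matrix (Fin 2) (Fin 2) (ZMod (p ^ n)))
        = 1 := by
      rw [mul_zero, Matrix.one_fin_two]
    rw [hone, Matrix.mul_one] at hMQ
    have hM : !![(u : ZMod (p ^ n)), k; 0, 1] = 1 := by
      rw [← Matrix.mul_one !![(u : ZMod (p ^ n)), k; 0, 1], ← hQP]
      have : P.val * Q = Q * P.val := hQP.trans hPQ.symm
      rw [this, ← Matrix.mul_assoc, hMQ]
    have m0 := congrFun (congrFun hM 0) 0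
    have m1 := congrFun (congrFun hM 0) 1
    simp at m0 m1
    exact ⟨by simp [m0], m1⟩
  · left
    have ht := congrArg Matrix.trace h
    rw [Matrix.trace_mul_comm, ← Matrix.mul_assoc, P.inv_mul, Matrix.one_mul] at ht
    simp [Matrix.trace_fin_two] at ht
    linear_combination ht
end
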